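/- Fix a day j. Let E, P, T be finite sets and W a nonempty finite set; let x : P × E → ℕ with x_{p,e} ∈ {0,1} and Σ_{p∈P} x_{p,e} = 1 for each e ∈ E; let r : P → ℕ with r_p ∈ {0,1}, b : P → ℕ with b_p = 1 − r_p, q : E → ℝ with 0 ≤ q_e ≤ 1, o ∈ ℕ, a : W × T → ℕ with a_{w,t} ∈ {0,1}, and d : T → ℕ. Set N = |E| − o − Σ_{e∈E} Σ_{p∈P} b_p · x_{p,e} and Q = Σ_{e∈E} q_e · Σ_{p∈P} r_p · x_{p,e}, let ε be real with 0 < ε ≤ 1, and assume ⌈Q⌉ − Q ≤ 1 − ε and the coverage constraint Σ_{e∈E} (1 − q_e) · Σ_{p∈P} r_p · x_{p,e} ≥ o. Then there exist v : W → ℕ and y, z : T → ℕ such that Σ_{w∈W} v_w ≤ N − Q, Σ_{w∈W} v_w ≥ N − Q − (1 − ε), and for every t ∈ T, Σ_{w∈W} a_{w,t} · v_w + y_t = d_t + z_t. -/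

import Mathlib

/-!
Since every employee has exactly one pattern and `b p + r p = 1`, the number of employees is the
number planned off plus the number planned to work. Hence `N - Q` equals the expected number of
present workers minus `o`, which the coverage constraint makes nonnegative. As `N` is an integer,
`⌈Q⌉ ≤ N`, so `N - ⌈Q⌉` employees can be assigned, all of them to one duty: this respects the upper
bound because `Q ≤ ⌈Q⌉` and the lower bound by the assumption on `⌈Q⌉ - Q`. The demand equation is
then balanced by taking `y = d` and `z` equal to the staffing level.
-/

/-- Feasibility of the second-stage (recourse) problem: for every first-stage
assignment satisfying constraints (2)-(3) and every demand scenario, there exist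
duty counts `v`, understaffing `y` and overstaffing `z` satisfying constraints
(4), (5) and the demand equation (6). -/
theorem stmt_5 {ιE ιP ιW ιT : Type*} (E : Finset ιE) (P : Finset ιP)
    (W : Finset ιW) (hW : W.Nonempty) (T : Finset ιT)
    (x : ιP × ιE → ℕ) (hx01 : ∀ p ∈ P, ∀ e ∈ E, x (p, e) = 0 ∨ x (p, e) = 1)
    (hxsum : ∀ e ∈ E, ∑ p ∈ P, x (p, e) = 1)
    (r : ιP → ℕ) (hr : ∀ p ∈ P, r p = 0 ∨ r p = 1)
    (b : ιP → ℕ) (hb : ∀ p ∈ P, b p = 1 - r p)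
    (q : ιE → ℝ) (hq : ∀ e ∈ E, 0 ≤ q e ∧ q e ≤ 1)
    (o : ℕ)
    (a : ιW × ιT → ℕ) (ha : ∀ w ∈ W, ∀ t ∈ T, a (w, t) = 0 ∨ a (w, t) = 1)
    (d : ιT → ℕ)
    (N : ℤ) (hN : N = (E.card : ℤ) - (o : ℤ) - ∑ e ∈ E, ∑ p ∈ P, (b p : ℤ) * (x (p, e) : ℤ))
    (Q : ℝ) (hQ : Q = ∑ e ∈ E, q e * ∑ p ∈ P, (r p : ℝ) * (x (p, e) : ℝ))
    (ε : ℝ) (hε0 : 0 < ε) (hε1 : ε ≤ 1) (hfrac : (⌈Q⌉ : ℝ) - Q ≤ 1 - ε)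
    (hcov : ∑ e ∈ E, (1 - q e) * ∑ p ∈ P, (r p : ℝ) * (x (p, e) : ℝ) ≥ (o : ℝ)) :
    ∃ (v : ιW → ℕ) (y z : ιT → ℕ),
      ((∑ w ∈ W, v w : ℕ) : ℝ) ≤ (N : ℝ) - Q ∧
      ((∑ w ∈ W, v w : ℕ) : ℝ) ≥ (N : ℝ) - Q - (1 - ε) ∧
      ∀ t ∈ T, ∑ w ∈ W, a (w, t) * v w + y t = d t + z t := by
  classical
  have hcard : (E.card : ℝ) = ∑ e ∈ E, ∑ p ∈ P, (b p : ℝ) * (x (p, e) : ℝ)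
      + ∑ e ∈ E, ∑ p ∈ P, (r p : ℝ) * (x (p, e) : ℝ) := by
    rw [← Finset.sum_add_distrib, Finset.card_eq_sum_ones, Nat.cast_sum]
    refine Finset.sum_congr rfl fun e he => ?_
    rw [← hxsum e he, Nat.cast_sum, ← Finset.sum_add_distrib]
    refine Finset.sum_congr rfl fun p hp => ?_
    rcases hr p hp with h | h <;> simp [hb p hp, h]
  have hNR : (N : ℝ) = (E.card : ℝ) - (o : ℝ)
      - ∑ e ∈ E, ∑ p ∈ P, (b p : ℝ) * (x (p, e) : ℝ) := by
    rw [hN]; push_cast; rfl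
  have hNQ : Q ≤ (N : ℝ) := by
    simp only [sub_mul, one_mul, Finset.sum_sub_distrib] at hcov
    linarith
  obtain ⟨k, hk⟩ := Int.eq_ofNat_of_zero_le (sub_nonneg.mpr (Int.ceil_le.mpr hNQ))
  have hkR : (N : ℝ) - (⌈Q⌉ : ℝ) = (k : ℝ) := by exact_mod_cast hk
  obtain ⟨w₀, hw₀⟩ := hW
  have hsum : ∑ w ∈ W, (if w = w₀ then k else 0) = k := by simp [hw₀]
  refine ⟨fun w => if w = w₀ then k else 0, d,
    fun t => ∑ w ∈ W, a (w, t) * (if w = w₀ then k else 0), ?_, ?_, fun t _ => add_comm _ _⟩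
  · rw [hsum]
    linarith [Int.le_ceil Q]
  · rw [hsum]
    linarith
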